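/- If an ideal A of D is expressible as A = (I₁I₂⋯Iₘ)* for finitely many *-homogeneous ideals I₁, …, Iₘ, then A is expressible as A = (J₁J₂⋯J_r)* where J₁, …, J_r are mutually *-comaximal *-homogeneous ideals, and this expression is unique up to order: if also A = (K₁K₂⋯K_s)* with K₁, …, K_s mutually *-comaximal *-homogeneous ideals, then r = s and the list K₁, …, K_s is a permutation of J₁, …, J_r. -/

import Mathlib

open scoped nonZeroDivisors

/-- A star operation on the nonzero fractional ideals of an integral domain `D`
with quotient field `K`: it fixes nonzero principal fractional ideals, commutes with
multiplication by nonzero principal fractional ideals, is extensive, monotone and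
idempotent (on nonzero fractional ideals). -/
structure StarOperation (D K : Type*) [CommRing D] [IsDomain D] [Field K]
    [Algebra D K] [IsFractionRing D K] where
  star : FractionalIdeal D⁰ K → FractionalIdeal D⁰ K
  star_spanSingleton : ∀ x : K, x ≠ 0 →
    star (FractionalIdeal.spanSingleton D⁰ x) = FractionalIdeal.spanSingleton D⁰ x
  star_smul : ∀ (x : K) (I : FractionalIdeal D⁰ K), x ≠ 0 → I ≠ 0 →
    star (FractionalIdeal.spanSingleton D⁰ x * I) = FractionalIdeal.spanSingleton D⁰ x * star I
  le_star : ∀ I : FractionalIdeal D⁰ K, I ≠ 0 → I ≤ star I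
  star_mono : ∀ I J : FractionalIdeal D⁰ K, I ≠ 0 → J ≠ 0 → I ≤ J → star I ≤ star J
  star_idem : ∀ I : FractionalIdeal D⁰ K, I ≠ 0 → star (star I) = star I

namespace StarOperation

variable {D K : Type*} [CommRing D] [IsDomain D] [Field K] [Algebra D K] [IsFractionRing D K]
variable (s : StarOperation D K)

/-- `*` has finite character: for every nonzero fractional ideal `I`, `I^*` is the union
of `J^*` over the nonzero finitely generated fractional subideals `J` of `I`. -/
def FiniteCharacter : Prop :=
  ∀ I : FractionalIdeal D⁰ K, I ≠ 0 → ∀ x ∈ s.star I,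
    ∃ J : FractionalIdeal D⁰ K, J ≠ 0 ∧ (J : Submodule D K).FG ∧ J ≤ I ∧ x ∈ s.star J

/-- A (nonzero) integral ideal `I` of `D` is a `*`-ideal if `I^* = I`. -/
def IsStarIdeal (I : Ideal D) : Prop :=
  I ≠ ⊥ ∧ s.star (I : FractionalIdeal D⁰ K) = (I : FractionalIdeal D⁰ K)

/-- An integral ideal `I` of `D` is a `*`-ideal of finite type if `I = J^*` for some
nonzero finitely generated ideal `J`. -/
def IsFiniteTypeStarIdeal (I : Ideal D) : Prop :=
  ∃ J : Ideal D, J ≠ ⊥ ∧ J.FG ∧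
    s.star (J : FractionalIdeal D⁰ K) = (I : FractionalIdeal D⁰ K)

/-- A maximal `*`-ideal: maximal among proper integral `*`-ideals. -/
def IsMaxStarIdeal (M : Ideal D) : Prop :=
  M ≠ ⊤ ∧ s.IsStarIdeal M ∧ ∀ J : Ideal D, J ≠ ⊤ → s.IsStarIdeal J → M ≤ J → J = M

/-- `I` is `*`-homogeneous: a proper `*`-ideal of finite type such that `(J + J')^* ≠ D`
for every pair `J`, `J'` of proper `*`-ideals of finite type containing `I`. -/
def IsHomog (I : Ideal D) : Prop :=
  I ≠ ⊤ ∧ s.IsStarIdeal I ∧ s.IsFiniteTypeStarIdeal I ∧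
    ∀ J J' : Ideal D, J ≠ ⊤ → J' ≠ ⊤ → s.IsStarIdeal J → s.IsStarIdeal J' →
      s.IsFiniteTypeStarIdeal J → s.IsFiniteTypeStarIdeal J' → I ≤ J → I ≤ J' →
      s.star ((J + J' : Ideal D) : FractionalIdeal D⁰ K) ≠ 1

/-- The set `M(I) = {x ∈ D : (xD + I)^* ≠ D}` attached to an ideal `I`. -/
def MSet (I : Ideal D) : Set D :=
  {x : D | s.star ((Ideal.span {x} + I : Ideal D) : FractionalIdeal D⁰ K) ≠ 1}

/-- `A` and `B` are `*`-comaximal if `(A + B)^* = D`. -/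
def StarComaximal (A B : Ideal D) : Prop :=
  s.star ((A + B : Ideal D) : FractionalIdeal D⁰ K) = 1

/-- An integral ideal `I` is `*`-invertible if `(I · I⁻¹)^* = D`. -/
def StarInvertible (I : Ideal D) : Prop :=
  s.star ((I : FractionalIdeal D⁰ K) * (I : FractionalIdeal D⁰ K)⁻¹) = 1

/-- `D` is a `*`-SH domain: every principal ideal generated by a nonzero nonunit is a
`*`-product of finitely many `*`-homogeneous ideals. -/
def IsSHDomain : Prop :=
  ∀ x : D, x ≠ 0 → ¬IsUnit x →
    ∃ T : Multiset (Ideal D), (∀ J ∈ T, s.IsHomog J) ∧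
      s.star ((T.prod : Ideal D) : FractionalIdeal D⁰ K) =
        ((Ideal.span {x} : Ideal D) : FractionalIdeal D⁰ K)

/-- `D` has finite `*`-character: every nonzero nonunit lies in only finitely many
maximal `*`-ideals. -/
def FiniteStarCharacter : Prop :=
  ∀ x : D, x ≠ 0 → ¬IsUnit x → {P : Ideal D | s.IsMaxStarIdeal P ∧ x ∈ P}.Finite

end StarOperation

/-!
On integral ideals a star operation is a closure operation `c` with `I * c J ≤ c (I * J)`, and
the argument uses nothing else about it. For a homogeneous `I`, two comaximal ideals of finite
type cannot both fail to be comaximal with `I`; hence "not comaximal" is transitive on homogeneous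
ideals and the closed product of two homogeneous ideals that are not comaximal is again
homogeneous, so a factorization can be made comaximal by merging factors. Uniqueness holds because
the factors of a comaximal factorization of `A` are exactly the minimal homogeneous ideals
containing `A`.
-/

theorem multiset_pairwise_cons {α : Type*} {r : α → α → Prop} [Std.Symm r] {a : α}
    {m : Multiset α} :
    (a ::ₘ m).Pairwise r ↔ (∀ b ∈ m, r a b) ∧ m.Pairwise r := by
  induction m using Quotient.inductionOn with
  | h l =>
    simp only [Multiset.quot_mk_to_coe, Multiset.cons_coe, Multiset.pairwise_coe_iff_pairwise,
      List.pairwise_cons, Multiset.mem_coe]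

/-- A semiprime operation: a closure operation `c` on the ideals of a commutative semiring with
`I * c J ≤ c (I * J)`. Star operations restrict to semiprime operations on integral ideals, see
`StarOperation.idealClosure`. -/
structure SemiprimeOperation (R : Type*) [CommSemiring R] extends ClosureOperator (Ideal R) where
  mul_closure_le (I J : Ideal R) : I * toClosureOperator J ≤ toClosureOperator (I * J)

namespace SemiprimeOperation

variable {R : Type*} [CommSemiring R]

instance : CoeFun (SemiprimeOperation R) fun _ ↦ Ideal R → Ideal R :=
  ⟨fun c ↦ c.toClosureOperator⟩

variable (c : SemiprimeOperation R) {I J L : Ideal R}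

theorem closure_mul_closure (I J : Ideal R) : c (I * c J) = c (I * J) :=
  le_antisymm (c.le_closure_iff.1 (c.mul_closure_le I J))
    (c.monotone (Ideal.mul_mono_right (c.le_closure J)))

theorem closure_closure_mul (I J : Ideal R) : c (c I * J) = c (I * J) := by
  rw [mul_comm, closure_mul_closure, mul_comm]

/-- `I` and `J` are comaximal with respect to `c` if their sum has closure `⊤`. -/
def Comaximal (I J : Ideal R) : Prop :=
  c (I ⊔ J) = ⊤

/-- An ideal is of finite type with respect to `c` if it is the closure of a finitely generated
ideal; in particular it is closed. -/
def IsFiniteType (I : Ideal R) : Prop :=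
  ∃ J : Ideal R, J.FG ∧ c J = I

/-- Homogeneous ideals with respect to `c`: proper ideals of finite type such that no two proper
ideals of finite type above them are comaximal. Unlike in `StarOperation.IsHomog`, the zero ideal
is not excluded. -/
structure IsHomogeneous (I : Ideal R) : Prop where
  ne_top : I ≠ ⊤
  isFiniteType : c.IsFiniteType I
  not_comaximal ⦃J J' : Ideal R⦄ : J ≠ ⊤ → J' ≠ ⊤ → c.IsFiniteType J → c.IsFiniteType J' →
    I ≤ J → I ≤ J' → ¬ c.Comaximal J J'

/-- Multisets of pairwise comaximal homogeneous ideals: the possible multisets of factors of a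
comaximal factorization. -/
structure IsComaximalFamily (U : Multiset (Ideal R)) : Prop where
  isHomogeneous : ∀ J ∈ U, c.IsHomogeneous J
  pairwise : U.Pairwise c.Comaximal

variable {c}

namespace Comaximal

theorem symm (h : c.Comaximal I J) : c.Comaximal J I := by
  rwa [Comaximal, sup_comm]

instance : Std.Symm c.Comaximal :=
  ⟨fun _ _ ↦ symm⟩

theorem mono {I' J' : Ideal R} (h : c.Comaximal I J) (hI : I ≤ I') (hJ : J ≤ J') :
    c.Comaximal I' J' :=
  top_le_iff.1 (h.ge.trans (c.monotone (sup_le_sup hI hJ)))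

theorem top_right (I : Ideal R) : c.Comaximal I ⊤ :=
  top_le_iff.1 (le_sup_right.trans (c.le_closure _))

theorem eq_top_of_le (h : c.Comaximal I J) (hIJ : I ≤ J) (hJ : c J = J) : J = ⊤ := by
  rw [Comaximal, sup_eq_right.2 hIJ, hJ] at h
  exact h

theorem le_of_mul_le (h : c.Comaximal L J) (hL : c L = L) (hIJ : I * J ≤ L) : I ≤ L :=
  calc
    I = I * c (L ⊔ J) := by rw [h, Ideal.mul_top]
    _ ≤ c (I * (L ⊔ J)) := c.mul_closure_le I _
    _ ≤ c L := c.monotone (by rw [Ideal.mul_sup]; exact sup_le Ideal.mul_le_right hIJ)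
    _ = L := hL

theorem mul_right (hJ : c.Comaximal I J) (hL : c.Comaximal I L) : c.Comaximal I (J * L) := by
  have hle : J * (I ⊔ L) ≤ I ⊔ J * L := by
    rw [Ideal.mul_sup]
    exact sup_le_sup_right Ideal.mul_le_right _
  have hJ_le : J ≤ c (I ⊔ J * L) :=
    calc
      J = J * c (I ⊔ L) := by rw [hL, Ideal.mul_top]
      _ ≤ c (J * (I ⊔ L)) := c.mul_closure_le J _
      _ ≤ c (I ⊔ J * L) := c.monotone hle
  exact top_le_iff.1 (hJ.ge.trans
    (c.le_closure_iff.1 (sup_le (le_sup_left.trans (c.le_closure _)) hJ_le)))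

theorem prod_right {W : Multiset (Ideal R)} (h : ∀ J ∈ W, c.Comaximal I J) :
    c.Comaximal I W.prod :=
  Multiset.prod_induction (c.Comaximal I) W (fun _ _ ↦ mul_right)
    (by rw [Ideal.one_eq_top]; exact top_right I) h

end Comaximal

namespace IsFiniteType

theorem closure_eq (hI : c.IsFiniteType I) : c I = I := by
  obtain ⟨I₀, -, rfl⟩ := hI
  exact c.idempotent I₀

theorem closure_sup (hI : c.IsFiniteType I) (hJ : c.IsFiniteType J) :
    c.IsFiniteType (c (I ⊔ J)) := by
  obtain ⟨I₀, hI₀, rfl⟩ := hI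
  obtain ⟨J₀, hJ₀, rfl⟩ := hJ
  exact ⟨I₀ ⊔ J₀, Submodule.FG.sup hI₀ hJ₀, (c.closure_sup_closure I₀ J₀).symm⟩

theorem closure_mul (hI : c.IsFiniteType I) (hJ : c.IsFiniteType J) :
    c.IsFiniteType (c (I * J)) := by
  obtain ⟨I₀, hI₀, rfl⟩ := hI
  obtain ⟨J₀, hJ₀, rfl⟩ := hJ
  exact ⟨I₀ * J₀, hI₀.mul hJ₀, by rw [closure_mul_closure, closure_closure_mul]⟩

end IsFiniteType

namespace IsHomogeneous

theorem closure_eq (hI : c.IsHomogeneous I) : c I = I :=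
  hI.isFiniteType.closure_eq

theorem not_comaximal_self (hI : c.IsHomogeneous I) : ¬ c.Comaximal I I :=
  fun h ↦ hI.ne_top (h.eq_top_of_le le_rfl hI.closure_eq)

theorem comaximal_or_comaximal (hI : c.IsHomogeneous I) (hJ : c.IsFiniteType J)
    (hL : c.IsFiniteType L) (hJL : c.Comaximal J L) : c.Comaximal I J ∨ c.Comaximal I L := by
  by_contra! ⟨hIJ, hIL⟩
  have le_left (B : Ideal R) : I ≤ c (I ⊔ B) := le_sup_left.trans (c.le_closure _)
  have le_right (B : Ideal R) : B ≤ c (I ⊔ B) := le_sup_right.trans (c.le_closure _)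
  exact hI.not_comaximal hIJ hIL (hI.isFiniteType.closure_sup hJ)
    (hI.isFiniteType.closure_sup hL) (le_left J) (le_left L) (hJL.mono (le_right J) (le_right L))

theorem not_comaximal_of_mul_le (hI : c.IsHomogeneous I) (hJ : c.IsHomogeneous J)
    (hIJ : ¬ c.Comaximal I J) (hL : c.IsFiniteType L) (hL_top : L ≠ ⊤) (hle : I * J ≤ L) :
    ¬ c.Comaximal I L := by
  intro hIL
  have hJL : J ≤ L := hIL.symm.le_of_mul_le hL.closure_eq (by rwa [mul_comm])
  rcases hJ.comaximal_or_comaximal hI.isFiniteType hL hIL with h | h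
  · exact hIJ h.symm
  · exact hL_top (h.eq_top_of_le hJL hL.closure_eq)

theorem closure_mul (hI : c.IsHomogeneous I) (hJ : c.IsHomogeneous J)
    (hIJ : ¬ c.Comaximal I J) : c.IsHomogeneous (c (I * J)) where
  ne_top h := hI.ne_top <| top_le_iff.1 <|
    h.ge.trans ((c.monotone Ideal.mul_le_left).trans hI.closure_eq.le)
  isFiniteType := hI.isFiniteType.closure_mul hJ.isFiniteType
  not_comaximal L L' hL_top hL'_top hL hL' hle hle' hLL' := by
    rcases hI.comaximal_or_comaximal hL hL' hLL' with h | h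
    · exact hI.not_comaximal_of_mul_le hJ hIJ hL hL_top ((c.le_closure _).trans hle) h
    · exact hI.not_comaximal_of_mul_le hJ hIJ hL' hL'_top ((c.le_closure _).trans hle') h

end IsHomogeneous

theorem isComaximalFamily_zero : c.IsComaximalFamily 0 :=
  ⟨by simp, Multiset.pairwise_zero _⟩

theorem isComaximalFamily_cons {U : Multiset (Ideal R)} :
    c.IsComaximalFamily (I ::ₘ U) ↔
      c.IsHomogeneous I ∧ (∀ J ∈ U, c.Comaximal I J) ∧ c.IsComaximalFamily U := by
  constructor
  · rintro ⟨hHom, hPair⟩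
    obtain ⟨hI, hU⟩ := Multiset.forall_mem_cons.1 hHom
    obtain ⟨hIU, hPairU⟩ := multiset_pairwise_cons.1 hPair
    exact ⟨hI, hIU, hU, hPairU⟩
  · rintro ⟨hI, hIU, hU⟩
    exact ⟨Multiset.forall_mem_cons.2 ⟨hI, hU.isHomogeneous⟩,
      multiset_pairwise_cons.2 ⟨hIU, hU.pairwise⟩⟩

namespace IsComaximalFamily

variable {U V : Multiset (Ideal R)}

theorem cons_closure_mul (hU : c.IsComaximalFamily (J ::ₘ U)) (hI : c.IsHomogeneous I)
    (hIJ : ¬ c.Comaximal I J) : c.IsComaximalFamily (c (I * J) ::ₘ U) := by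
  obtain ⟨hJ, hJU, hU⟩ := isComaximalFamily_cons.1 hU
  refine isComaximalFamily_cons.2 ⟨hI.closure_mul hJ hIJ, fun L hL ↦ ?_, hU⟩
  have hIL : c.Comaximal I L :=
    (hI.comaximal_or_comaximal hJ.isFiniteType (hU.isHomogeneous L hL).isFiniteType
      (hJU L hL)).resolve_left hIJ
  exact (hIL.symm.mul_right (hJU L hL).symm).symm.mono (c.le_closure _) le_rfl

theorem nodup (hU : c.IsComaximalFamily U) : U.Nodup := by
  induction U using Multiset.induction_on with
  | empty => exact Multiset.nodup_zero
  | cons J U ih =>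
    obtain ⟨hJ, hJU, hU⟩ := isComaximalFamily_cons.1 hU
    exact Multiset.nodup_cons.2 ⟨fun hmem ↦ hJ.not_comaximal_self (hJU J hmem), ih hU⟩

theorem eq_of_le (hU : c.IsComaximalFamily U) (hI : I ∈ U) (hJ : J ∈ U) (hIJ : I ≤ J) :
    I = J := by
  by_contra hne
  have hJ_hom := hU.isHomogeneous J hJ
  exact hJ_hom.ne_top ((hU.pairwise.forall hI hJ hne).eq_top_of_le hIJ hJ_hom.closure_eq)

theorem exists_mem_le (hU : c.IsComaximalFamily U) (hL : c.IsHomogeneous L)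
    (hle : U.prod ≤ L) : ∃ J ∈ U, J ≤ L := by
  induction U using Multiset.induction_on with
  | empty =>
    rw [Multiset.prod_zero, Ideal.one_eq_top] at hle
    exact absurd (top_le_iff.1 hle) hL.ne_top
  | cons J U ih =>
    obtain ⟨hJ, hJU, hU⟩ := isComaximalFamily_cons.1 hU
    rw [Multiset.prod_cons] at hle
    by_cases hLJ : c.Comaximal L J
    · have hUL : U.prod ≤ L := hLJ.le_of_mul_le hL.closure_eq (by rwa [mul_comm])
      obtain ⟨I, hI, hIL⟩ := ih hU hUL
      exact ⟨I, Multiset.mem_cons_of_mem hI, hIL⟩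
    · have hLU : c.Comaximal L U.prod := Comaximal.prod_right fun I hI ↦
        (hL.comaximal_or_comaximal hJ.isFiniteType (hU.isHomogeneous I hI).isFiniteType
          (hJU I hI)).resolve_left hLJ
      exact ⟨J, Multiset.mem_cons_self J U, hLU.le_of_mul_le hL.closure_eq hle⟩

theorem closure_prod_le (hU : c.IsComaximalFamily U) (hJ : J ∈ U) : c U.prod ≤ J :=
  calc
    c U.prod ≤ c J := c.monotone (Ideal.multiset_prod_le_inf.trans (Multiset.inf_le hJ))
    _ = J := (hU.isHomogeneous J hJ).closure_eq

theorem mem_iff_minimal (hU : c.IsComaximalFamily U) :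
    L ∈ U ↔ Minimal (fun I ↦ c.IsHomogeneous I ∧ c U.prod ≤ I) L := by
  constructor
  · intro hL
    refine ⟨⟨hU.isHomogeneous L hL, hU.closure_prod_le hL⟩, ?_⟩
    rintro I ⟨hI, hUI⟩ hIL
    obtain ⟨J, hJ, hJI⟩ := hU.exists_mem_le hI ((c.le_closure _).trans hUI)
    exact hU.eq_of_le hJ hL (hJI.trans hIL) ▸ hJI
  · rintro ⟨⟨hL, hUL⟩, hmin⟩
    obtain ⟨J, hJ, hJL⟩ := hU.exists_mem_le hL ((c.le_closure _).trans hUL)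
    have hLJ : L ≤ J := hmin ⟨hU.isHomogeneous J hJ, hU.closure_prod_le hJ⟩ hJL
    exact hLJ.antisymm hJL ▸ hJ

theorem eq_of_closure_prod_eq (hU : c.IsComaximalFamily U) (hV : c.IsComaximalFamily V)
    (h : c U.prod = c V.prod) : U = V :=
  (hU.nodup.ext hV.nodup).2 fun _ ↦ by rw [hU.mem_iff_minimal, hV.mem_iff_minimal, h]

end IsComaximalFamily

theorem exists_isComaximalFamily {T : Multiset (Ideal R)} (hT : ∀ J ∈ T, c.IsHomogeneous J) :
    ∃ U, c.IsComaximalFamily U ∧ c U.prod = c T.prod := by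
  induction T using Multiset.induction_on with
  | empty => exact ⟨0, isComaximalFamily_zero, rfl⟩
  | cons I T ih =>
    obtain ⟨hI, hT⟩ := Multiset.forall_mem_cons.1 hT
    obtain ⟨U, hU, hUT⟩ := ih hT
    have hprod : c (I * U.prod) = c (I ::ₘ T).prod := by
      rw [Multiset.prod_cons, ← closure_mul_closure, hUT, closure_mul_closure]
    by_cases hIU : ∀ J ∈ U, c.Comaximal I J
    · exact ⟨I ::ₘ U, isComaximalFamily_cons.2 ⟨hI, hIU, hU⟩, by rwa [Multiset.prod_cons]⟩
    · push Not at hIU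
      obtain ⟨J, hJ, hIJ⟩ := hIU
      obtain ⟨W, rfl⟩ := Multiset.exists_cons_of_mem hJ
      refine ⟨c (I * J) ::ₘ W, hU.cons_closure_mul hI hIJ, ?_⟩
      rw [← hprod, Multiset.prod_cons, Multiset.prod_cons, closure_closure_mul, mul_assoc]

end SemiprimeOperation

namespace StarOperation

variable {D K : Type*} [CommRing D] [IsDomain D] [Field K] [Algebra D K] [IsFractionRing D K]
variable (s : StarOperation D K) {I J A : Ideal D} {U : Multiset (Ideal D)}

theorem star_one : s.star 1 = 1 := by
  simpa only [FractionalIdeal.spanSingleton_one] using s.star_spanSingleton 1 one_ne_zero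

theorem mul_star_le (I : FractionalIdeal D⁰ K) {J : FractionalIdeal D⁰ K} (hJ : J ≠ 0) :
    I * s.star J ≤ s.star (I * J) := by
  refine FractionalIdeal.mul_le.2 fun x hx y hy ↦ ?_
  rcases eq_or_ne x 0 with rfl | hx0
  · rw [zero_mul]
    exact Submodule.zero_mem (s.star (I * J) : Submodule D K)
  have hx_unit : IsUnit (FractionalIdeal.spanSingleton D⁰ x) :=
    .of_mul_eq_one _ (FractionalIdeal.spanSingleton_mul_inv K hx0)
  have hxJ : FractionalIdeal.spanSingleton D⁰ x * J ≠ 0 := mt hx_unit.mul_right_eq_zero.1 hJ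
  have hxJ_le : FractionalIdeal.spanSingleton D⁰ x * J ≤ I * J :=
    mul_le_mul_left (FractionalIdeal.spanSingleton_le_iff_mem.2 hx) J
  have hIJ : I * J ≠ 0 := fun h ↦ hxJ (FractionalIdeal.le_zero_iff.1 (hxJ_le.trans_eq h))
  refine s.star_mono _ _ hxJ hIJ hxJ_le ?_
  rw [s.star_smul x J hx0 hJ]
  exact FractionalIdeal.mul_mem_mul (FractionalIdeal.mem_spanSingleton_self D⁰ x) hy

open Classical in
/-- The restriction of `*` to integral ideals. The value at `⊥` is set to `⊥`, as `*` is
unconstrained at the zero fractional ideal. -/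
noncomputable def integralStar (I : Ideal D) : Ideal D :=
  if I = ⊥ then ⊥ else (s.star I : Submodule D K).comap (Algebra.linearMap D K)

theorem integralStar_bot : s.integralStar ⊥ = ⊥ :=
  if_pos rfl

theorem coeIdeal_integralStar (hI : I ≠ ⊥) :
    (s.integralStar I : FractionalIdeal D⁰ K) = s.star I := by
  have hle : s.star I ≤ 1 :=
    (s.star_mono _ _ (FractionalIdeal.coeIdeal_ne_zero.2 hI) one_ne_zero
      FractionalIdeal.coeIdeal_le_one).trans_eq s.star_one
  obtain ⟨J, hJ⟩ := FractionalIdeal.le_one_iff_exists_coeIdeal.1 hle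
  have hIJ : s.integralStar I = J := by
    rw [integralStar, if_neg hI, ← hJ, FractionalIdeal.coe_coeIdeal]
    exact Submodule.comap_map_eq_of_injective (IsFractionRing.injective D K) J
  rw [hIJ, hJ]

theorem le_integralStar (I : Ideal D) : I ≤ s.integralStar I := by
  rcases eq_or_ne I ⊥ with rfl | hI
  · exact bot_le
  rw [← FractionalIdeal.coeIdeal_le_coeIdeal K, s.coeIdeal_integralStar hI]
  exact s.le_star _ (FractionalIdeal.coeIdeal_ne_zero.2 hI)

theorem integralStar_eq_bot_iff : s.integralStar I = ⊥ ↔ I = ⊥ :=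
  ⟨fun h ↦ le_bot_iff.1 (h ▸ s.le_integralStar I), fun h ↦ h ▸ s.integralStar_bot⟩

theorem integralStar_le_integralStar (h : I ≤ s.integralStar J) :
    s.integralStar I ≤ s.integralStar J := by
  rcases eq_or_ne I ⊥ with rfl | hI
  · exact s.integralStar_bot.trans_le bot_le
  have hJ : J ≠ ⊥ := fun hJ ↦ hI (le_bot_iff.1 (h.trans_eq (s.integralStar_eq_bot_iff.2 hJ)))
  have hJ0 := FractionalIdeal.coeIdeal_ne_zero (K := K).2 hJ
  have hsJ : s.star (J : FractionalIdeal D⁰ K) ≠ 0 := by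
    rw [← s.coeIdeal_integralStar hJ]
    exact FractionalIdeal.coeIdeal_ne_zero.2 (mt s.integralStar_eq_bot_iff.1 hJ)
  rw [← FractionalIdeal.coeIdeal_le_coeIdeal K, s.coeIdeal_integralStar hJ] at h ⊢
  rw [s.coeIdeal_integralStar hI, ← s.star_idem _ hJ0]
  exact s.star_mono _ _ (FractionalIdeal.coeIdeal_ne_zero.2 hI) hsJ h

theorem mul_integralStar_le (I J : Ideal D) : I * s.integralStar J ≤ s.integralStar (I * J) := by
  rcases eq_or_ne I ⊥ with rfl | hI
  · rw [Ideal.bot_mul]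
    exact bot_le
  rcases eq_or_ne J ⊥ with rfl | hJ
  · rw [integralStar_bot, Ideal.mul_bot]
    exact bot_le
  rw [← FractionalIdeal.coeIdeal_le_coeIdeal K, s.coeIdeal_integralStar (mul_ne_zero hI hJ),
    FractionalIdeal.coeIdeal_mul, FractionalIdeal.coeIdeal_mul, s.coeIdeal_integralStar hJ]
  exact s.mul_star_le _ (FractionalIdeal.coeIdeal_ne_zero.2 hJ)

/-- The semiprime operation on the ideals of `D` given by `StarOperation.integralStar`. -/
noncomputable def idealClosure : SemiprimeOperation D where
  toClosureOperator :=
    .mk₂ s.integralStar s.le_integralStar fun _ _ ↦ s.integralStar_le_integralStar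
  mul_closure_le := s.mul_integralStar_le

theorem idealClosure_eq_bot_iff : s.idealClosure I = ⊥ ↔ I = ⊥ :=
  s.integralStar_eq_bot_iff

theorem star_coeIdeal_eq_iff (hI : I ≠ ⊥) :
    s.star (I : FractionalIdeal D⁰ K) = J ↔ s.idealClosure I = J := by
  rw [← s.coeIdeal_integralStar hI]
  exact FractionalIdeal.coeIdeal_inj

theorem starComaximal_iff (hI : I ≠ ⊥) :
    s.StarComaximal I J ↔ s.idealClosure.Comaximal I J := by
  have hIJ : I ⊔ J ≠ ⊥ := ne_bot_of_le_ne_bot hI le_sup_left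
  rw [StarComaximal, SemiprimeOperation.Comaximal, ← FractionalIdeal.coeIdeal_top,
    Submodule.add_eq_sup, s.star_coeIdeal_eq_iff hIJ]

theorem pairwise_starComaximal_iff (hU : ∀ I ∈ U, I ≠ ⊥) :
    U.Pairwise s.StarComaximal ↔ U.Pairwise s.idealClosure.Comaximal :=
  exists_congr fun _ ↦ and_congr_right fun hl ↦ List.Pairwise.iff_of_mem fun hI _ ↦
    s.starComaximal_iff (hU _ (hl ▸ hI))

theorem isFiniteTypeStarIdeal_iff :
    s.IsFiniteTypeStarIdeal I ↔ I ≠ ⊥ ∧ s.idealClosure.IsFiniteType I := by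
  constructor
  · rintro ⟨J, hJ, hJ_fg, hJI⟩
    rw [s.star_coeIdeal_eq_iff hJ] at hJI
    exact ⟨hJI ▸ mt s.idealClosure_eq_bot_iff.1 hJ, J, hJ_fg, hJI⟩
  · rintro ⟨hI, J, hJ_fg, rfl⟩
    have hJ : J ≠ ⊥ := mt s.idealClosure_eq_bot_iff.2 hI
    exact ⟨J, hJ, hJ_fg, (s.star_coeIdeal_eq_iff hJ).2 rfl⟩

theorem IsFiniteTypeStarIdeal.isStarIdeal {s : StarOperation D K}
    (hI : s.IsFiniteTypeStarIdeal I) : s.IsStarIdeal I := by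
  obtain ⟨hI_bot, hI_ft⟩ := s.isFiniteTypeStarIdeal_iff.1 hI
  exact ⟨hI_bot, (s.star_coeIdeal_eq_iff hI_bot).2 hI_ft.closure_eq⟩

theorem isHomog_iff : s.IsHomog I ↔ I ≠ ⊥ ∧ s.idealClosure.IsHomogeneous I := by
  constructor
  · rintro ⟨hI_top, ⟨hI_bot, -⟩, hI_ft, hI⟩
    refine ⟨hI_bot, hI_top, (s.isFiniteTypeStarIdeal_iff.1 hI_ft).2, ?_⟩
    intro J J' hJ_top hJ'_top hJ hJ' hIJ hIJ' hJJ'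
    have hJ_bot : J ≠ ⊥ := ne_bot_of_le_ne_bot hI_bot hIJ
    have hJ_ft := s.isFiniteTypeStarIdeal_iff.2 ⟨hJ_bot, hJ⟩
    have hJ'_ft := s.isFiniteTypeStarIdeal_iff.2 ⟨ne_bot_of_le_ne_bot hI_bot hIJ', hJ'⟩
    exact hI J J' hJ_top hJ'_top hJ_ft.isStarIdeal hJ'_ft.isStarIdeal hJ_ft hJ'_ft hIJ hIJ'
      ((s.starComaximal_iff hJ_bot).2 hJJ')
  · rintro ⟨hI_bot, hI⟩
    have hI_ft := s.isFiniteTypeStarIdeal_iff.2 ⟨hI_bot, hI.isFiniteType⟩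
    refine ⟨hI.ne_top, hI_ft.isStarIdeal, hI_ft, ?_⟩
    intro J J' hJ_top hJ'_top hJ_star _ hJ hJ' hIJ hIJ' hJJ'
    exact hI.not_comaximal hJ_top hJ'_top (s.isFiniteTypeStarIdeal_iff.1 hJ).2
      (s.isFiniteTypeStarIdeal_iff.1 hJ').2 hIJ hIJ' ((s.starComaximal_iff hJ_star.1).1 hJJ')

theorem prod_ne_bot (hU : ∀ I ∈ U, s.IsHomog I) : U.prod ≠ ⊥ :=
  Multiset.prod_ne_zero fun h ↦ (s.isHomog_iff.1 (hU 0 h)).1 rfl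

theorem isComaximalFamily_and_closure_prod_eq_iff (hA : A ≠ ⊥) :
    s.idealClosure.IsComaximalFamily U ∧ s.idealClosure U.prod = A ↔
      (∀ J ∈ U, s.IsHomog J) ∧ U.Pairwise s.StarComaximal ∧
        s.star ((U.prod : Ideal D) : FractionalIdeal D⁰ K) = (A : FractionalIdeal D⁰ K) := by
  constructor
  · rintro ⟨⟨hHom, hPair⟩, rfl⟩
    have hprod : U.prod ≠ ⊥ := mt s.idealClosure_eq_bot_iff.2 hA
    have hbot : ∀ J ∈ U, J ≠ ⊥ := by
      rintro J hJ rfl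
      exact hprod (Multiset.prod_eq_zero hJ)
    exact ⟨fun J hJ ↦ s.isHomog_iff.2 ⟨hbot J hJ, hHom J hJ⟩,
      (s.pairwise_starComaximal_iff hbot).2 hPair, (s.star_coeIdeal_eq_iff hprod).2 rfl⟩
  · rintro ⟨hHom, hPair, hstar⟩
    have hbot : ∀ J ∈ U, J ≠ ⊥ := fun J hJ ↦ (s.isHomog_iff.1 (hHom J hJ)).1
    exact ⟨⟨fun J hJ ↦ (s.isHomog_iff.1 (hHom J hJ)).2,
      (s.pairwise_starComaximal_iff hbot).1 hPair⟩,
      (s.star_coeIdeal_eq_iff (s.prod_ne_bot hHom)).1 hstar⟩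

end StarOperation

theorem unique_comaximal_homog_factorization_general {D K : Type*} [CommRing D] [IsDomain D]
    [Field K] [Algebra D K] [IsFractionRing D K] (s : StarOperation D K)
    (A : Ideal D) (T : Multiset (Ideal D)) (hT : ∀ J ∈ T, s.IsHomog J)
    (hA : s.star ((T.prod : Ideal D) : FractionalIdeal D⁰ K) = (A : FractionalIdeal D⁰ K)) :
    ∃ U : Multiset (Ideal D), (∀ J ∈ U, s.IsHomog J) ∧ U.Pairwise s.StarComaximal ∧
      s.star ((U.prod : Ideal D) : FractionalIdeal D⁰ K) = (A : FractionalIdeal D⁰ K) ∧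
      ∀ V : Multiset (Ideal D), (∀ J ∈ V, s.IsHomog J) → V.Pairwise s.StarComaximal →
        s.star ((V.prod : Ideal D) : FractionalIdeal D⁰ K) = (A : FractionalIdeal D⁰ K) →
        V = U := by
  have hT_bot : T.prod ≠ ⊥ := s.prod_ne_bot hT
  have hTA : s.idealClosure T.prod = A := (s.star_coeIdeal_eq_iff hT_bot).1 hA
  have hA_bot : A ≠ ⊥ := hTA ▸ mt s.idealClosure_eq_bot_iff.1 hT_bot
  obtain ⟨U, hU, hUT⟩ := SemiprimeOperation.exists_isComaximalFamily
    fun J hJ ↦ (s.isHomog_iff.1 (hT J hJ)).2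
  have hUA := hUT.trans hTA
  obtain ⟨hU_hom, hU_pair, hU_star⟩ :=
    (s.isComaximalFamily_and_closure_prod_eq_iff hA_bot).1 ⟨hU, hUA⟩
  refine ⟨U, hU_hom, hU_pair, hU_star, fun V hV_hom hV_pair hV_star ↦ ?_⟩
  obtain ⟨hV, hVA⟩ :=
    (s.isComaximalFamily_and_closure_prod_eq_iff hA_bot).2 ⟨hV_hom, hV_pair, hV_star⟩
  exact hV.eq_of_closure_prod_eq hU (hVA.trans hUA.symm)

/-- If `A = (I₁⋯Iₘ)^*` for finitely many `*`-homogeneous ideals, then `A` is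
expressible as `A = (J₁⋯J_r)^*` with the `Jᵢ` mutually `*`-comaximal `*`-homogeneous
ideals, uniquely up to order (i.e. the multiset of factors is unique). -/
theorem unique_comaximal_homog_factorization {D K : Type*} [CommRing D] [IsDomain D]
    [Field K] [Algebra D K] [IsFractionRing D K] (s : StarOperation D K)
    (hs : s.FiniteCharacter) (A : Ideal D) (T : Multiset (Ideal D))
    (hT : ∀ J ∈ T, s.IsHomog J)
    (hA : s.star ((T.prod : Ideal D) : FractionalIdeal D⁰ K) = (A : FractionalIdeal D⁰ K)) :
    ∃ U : Multiset (Ideal D), (∀ J ∈ U, s.IsHomog J) ∧ U.Pairwise s.StarComaximal ∧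
      s.star ((U.prod : Ideal D) : FractionalIdeal D⁰ K) = (A : FractionalIdeal D⁰ K) ∧
      ∀ V : Multiset (Ideal D), (∀ J ∈ V, s.IsHomog J) → V.Pairwise s.StarComaximal →
        s.star ((V.prod : Ideal D) : FractionalIdeal D⁰ K) = (A : FractionalIdeal D⁰ K) →
        V = U :=
  unique_comaximal_homog_factorization_general s A T hT hA
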